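/- arXiv:2109.00880 — 2 statements merged into one kernel-verified Lean document; each statement's English description precedes it below -/
import Mathlib

section
/- For all α > 0, β > 0 and 0 < ν < 1, the ν-Birnbaum–Saunders density integrates to one: ∫₀^∞ (ν/(αβ√(2π))) · exp(−(1/(2α²))((t/β)^{2ν} + (β/t)^{2ν} − 2)) · ((t/β)^{ν−1} + (β/t)^{ν+1}) dt = 1. -/
open Real Filter Set MeasureTheory

/-! At `t > 0` the density equals `ξ' t * φ (ξ t)`, where `φ` is the standard normal density and
`ξ t = ((t / β) ^ ν - (β / t) ^ ν) / α` increases from `-∞` to `∞` on `(0, ∞)`; substituting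
`y = ξ t` turns the integral into that of `φ`. -/

/-- The standardizing map of the `ν`-Birnbaum–Saunders law with parameters `α` and `β`, which pushes
it forward to the standard normal law. It is meant for `t > 0` only. -/
noncomputable def nuBSStandardize (α β ν t : ℝ) : ℝ :=
  ((t / β) ^ ν - (β / t) ^ ν) / α

section Standardize

variable {α β ν t : ℝ}

theorem hasDerivAt_nuBSStandardize (α ν : ℝ) (hβ : β ≠ 0) (ht : t ≠ 0) :
    HasDerivAt (nuBSStandardize α β ν)
      (ν / (α * β) * ((t / β) ^ (ν - 1) + (β / t) ^ (ν + 1))) t := by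
  have h_left : HasDerivAt (fun s ↦ (s / β) ^ ν) (1 / β * ν * (t / β) ^ (ν - 1)) t :=
    ((hasDerivAt_id t).div_const β).rpow_const (.inl (div_ne_zero ht hβ))
  have h_inv : HasDerivAt (fun s ↦ β / s) (-β / t ^ 2) t := by
    simpa using (hasDerivAt_const t β).fun_div (hasDerivAt_id t) ht
  have h_right : HasDerivAt (fun s ↦ (β / s) ^ ν) (-β / t ^ 2 * ν * (β / t) ^ (ν - 1)) t :=
    h_inv.rpow_const (.inl (div_ne_zero hβ ht))
  have h_pow : (β / t) ^ (ν + 1) = (β / t) ^ (ν - 1) * (β / t) ^ 2 := by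
    rw [← rpow_add_natCast (div_ne_zero hβ ht)]
    congr 1
    push_cast
    ring
  refine ((h_left.sub h_right).div_const α).congr_deriv ?_
  rw [h_pow]
  field_simp
  ring

theorem monotoneOn_nuBSStandardize (hα : 0 ≤ α) (hβ : 0 ≤ β) (hν : 0 ≤ ν) :
    MonotoneOn (nuBSStandardize α β ν) (Ioi 0) := by
  intro s (hs : 0 < s) t (ht : 0 < t) hst
  unfold nuBSStandardize
  gcongr

theorem surjOn_nuBSStandardize (hα : α ≠ 0) (hβ : 0 < β) (hν : ν ≠ 0) :
    SurjOn (nuBSStandardize α β ν) (Ioi 0) univ := by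
  intro y _
  -- At `t = β * exp (u / ν)` the standardization is `2 * sinh u / α`.
  set u := arsinh (α * y / 2) with hu
  refine ⟨β * exp (u / ν), mul_pos hβ (exp_pos _), ?_⟩
  have h_left : (β * exp (u / ν) / β) ^ ν = exp u := by
    rw [mul_div_cancel_left₀ _ hβ.ne', ← exp_mul, div_mul_cancel₀ _ hν]
  have h_right : (β / (β * exp (u / ν))) ^ ν = exp (-u) := by
    rw [div_mul_cancel_left₀ hβ.ne', ← exp_neg, ← exp_mul, neg_mul, div_mul_cancel₀ _ hν]
  have h_sinh : exp u - exp (-u) = α * y := by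
    rw [← mul_div_cancel₀ (α * y) two_ne_zero, ← sinh_arsinh (α * y / 2), ← hu, sinh_eq]
    ring
  rw [nuBSStandardize, h_left, h_right, h_sinh, mul_div_cancel_left₀ _ hα]

theorem integral_comp_nuBSStandardize {F : Type*} [NormedAddCommGroup F] [NormedSpace ℝ F]
    (hα : 0 < α) (hβ : 0 < β) (hν : 0 < ν) (g : ℝ → F) :
    ∫ t in Ioi 0, (ν / (α * β) * ((t / β) ^ (ν - 1) + (β / t) ^ (ν + 1))) •
      g (nuBSStandardize α β ν t) = ∫ y, g y := by
  have h_image : nuBSStandardize α β ν '' Ioi 0 = univ :=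
    univ_subset_iff.mp (surjOn_nuBSStandardize hα.ne' hβ hν.ne')
  rw [← integral_image_eq_integral_deriv_smul_of_monotoneOn measurableSet_Ioi
    (fun t ht ↦ (hasDerivAt_nuBSStandardize α ν hβ.ne' (ne_of_gt ht)).hasDerivWithinAt)
    (monotoneOn_nuBSStandardize hα.le hβ.le hν.le), h_image, setIntegral_univ]

theorem nuBSStandardize_sq (α ν : ℝ) (hβ : 0 < β) (ht : 0 < t) :
    nuBSStandardize α β ν t ^ 2 =
      ((t / β) ^ (2 * ν) + (β / t) ^ (2 * ν) - 2) / α ^ 2 := by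
  have h_sq {x : ℝ} (hx : 0 < x) : x ^ (2 * ν) = (x ^ ν) ^ 2 := by
    rw [mul_comm, rpow_mul hx.le, rpow_two]
  have h_cross : (t / β) ^ ν * (β / t) ^ ν = 1 := by
    rw [← mul_rpow (div_pos ht hβ).le (div_pos hβ ht).le, div_mul_div_cancel₀ hβ.ne',
      div_self ht.ne', one_rpow]
  rw [nuBSStandardize, div_pow, h_sq (div_pos ht hβ), h_sq (div_pos hβ ht)]
  congr 1
  linear_combination -2 * h_cross

theorem nuBS_pdf_eq_mul_gaussianPDFReal (α ν : ℝ) (hβ : 0 < β) (ht : 0 < t) :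
    ν / (α * β * √(2 * π)) *
        exp (-(1 / (2 * α ^ 2)) * ((t / β) ^ (2 * ν) + (β / t) ^ (2 * ν) - 2)) *
        ((t / β) ^ (ν - 1) + (β / t) ^ (ν + 1)) =
      ν / (α * β) * ((t / β) ^ (ν - 1) + (β / t) ^ (ν + 1)) *
        ProbabilityTheory.gaussianPDFReal 0 1 (nuBSStandardize α β ν t) := by
  have h_exponent : -(1 / (2 * α ^ 2)) * ((t / β) ^ (2 * ν) + (β / t) ^ (2 * ν) - 2) =
      -nuBSStandardize α β ν t ^ 2 / 2 := by
    rw [nuBSStandardize_sq α ν hβ ht]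
    ring
  simp only [h_exponent, ProbabilityTheory.gaussianPDFReal, NNReal.coe_one, mul_one, sub_zero]
  ring

end Standardize

theorem nuBS_pdf_integral_eq_one_general (α β ν : ℝ) (hα : 0 < α) (hβ : 0 < β) (hν : 0 < ν) :
    ∫ t in Ioi (0 : ℝ),
      (ν / (α * β * √(2 * π))) *
        exp (-(1 / (2 * α ^ 2)) * ((t / β) ^ (2 * ν) + (β / t) ^ (2 * ν) - 2)) *
        ((t / β) ^ (ν - 1) + (β / t) ^ (ν + 1)) = 1 := by
  calc
    _ = ∫ t in Ioi 0, (ν / (α * β) * ((t / β) ^ (ν - 1) + (β / t) ^ (ν + 1))) •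
          ProbabilityTheory.gaussianPDFReal 0 1 (nuBSStandardize α β ν t) :=
      setIntegral_congr_fun measurableSet_Ioi
        fun t ht ↦ nuBS_pdf_eq_mul_gaussianPDFReal α ν hβ ht
    _ = ∫ y, ProbabilityTheory.gaussianPDFReal 0 1 y :=
      integral_comp_nuBSStandardize hα hβ hν _
    _ = 1 := ProbabilityTheory.integral_gaussianPDFReal_eq_one 0 one_ne_zero

theorem nuBS_pdf_integral_eq_one (α β ν : ℝ) (hα : 0 < α) (hβ : 0 < β)
    (hν0 : 0 < ν) (hν1 : ν < 1) :
    ∫ t in Set.Ioi (0 : ℝ),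
      (ν / (α * β * Real.sqrt (2 * Real.pi))) *
        Real.exp (-(1 / (2 * α ^ 2)) * ((t / β) ^ (2 * ν) + (β / t) ^ (2 * ν) - 2)) *
        ((t / β) ^ (ν - 1) + (β / t) ^ (ν + 1)) = 1 :=
  nuBS_pdf_integral_eq_one_general α β ν hα hβ hν0
end

section
/- Let α₁, α₂, β₁, β₂ > 0, 0 < ν₁, ν₂ < 1 and −1 < ρ < 1. For every t₁ > 0, integrating the bivariate ν-BS joint density over t₂ ∈ (0,∞) yields the univariate ν-BS density: ∫₀^∞ f_{T₁,T₂}(t₁, t₂) dt₂ = (ν₁/(α₁β₁√(2π))) · exp(−(1/(2α₁²))((t₁/β₁)^{2ν₁} + (β₁/t₁)^{2ν₁} − 2)) · ((t₁/β₁)^{ν₁−1} + (β₁/t₁)^{ν₁+1}). -/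
open Real Filter Set MeasureTheory

/-!
The substitution `y = (t / β) ^ ν - (β / t) ^ ν`, which is `2 * sinh (ν * log (t / β))`, maps the
positive half-line diffeomorphically onto the real line. In the coordinates it provides, the joint
density is a centred bivariate Gaussian density, and completing the square in the second coordinate
splits it into the first marginal times a Gaussian density in the second coordinate, the
conditional one, whose total mass is `1`.
-/

/-- The transformation under which a `ν`-Birnbaum–Saunders variable with scale `β` becomes
Gaussian. It is meant for `0 < β` and `0 < t`. -/
noncomputable def nuBSTransform (β ν t : ℝ) : ℝ := (t / β) ^ ν - (β / t) ^ ν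

/-- The univariate `ν`-Birnbaum–Saunders density with shape `α` and scale `β`, as a function on
all of `ℝ` that is meaningful only at `0 < t`. -/
noncomputable def nuBSPDF (α β ν t : ℝ) : ℝ :=
  (ν / (α * β * √(2 * π))) *
    exp (-(1 / (2 * α ^ 2)) * ((t / β) ^ (2 * ν) + (β / t) ^ (2 * ν) - 2)) *
    ((t / β) ^ (ν - 1) + (β / t) ^ (ν + 1))

/-- The bivariate `ν`-Birnbaum–Saunders density with correlation parameter `ρ`; meaningful only at
`0 < t₁`, `0 < t₂`. -/
noncomputable def bvNuBSPDF (α₁ β₁ ν₁ α₂ β₂ ν₂ ρ t₁ t₂ : ℝ) : ℝ :=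
  (ν₁ * ν₂ / (2 * π * α₁ * α₂ * β₁ * β₂ * √(1 - ρ ^ 2))) *
    ((t₁ / β₁) ^ (ν₁ - 1) + (β₁ / t₁) ^ (ν₁ + 1)) *
    ((t₂ / β₂) ^ (ν₂ - 1) + (β₂ / t₂) ^ (ν₂ + 1)) *
    exp (-(1 / (2 * (1 - ρ ^ 2))) *
      ((1 / α₁ ^ 2) * ((t₁ / β₁) ^ ν₁ - (β₁ / t₁) ^ ν₁) ^ 2 +
        (1 / α₂ ^ 2) * ((t₂ / β₂) ^ ν₂ - (β₂ / t₂) ^ ν₂) ^ 2 -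
        (2 * ρ / (α₁ * α₂)) * ((t₁ / β₁) ^ ν₁ - (β₁ / t₁) ^ ν₁) *
          ((t₂ / β₂) ^ ν₂ - (β₂ / t₂) ^ ν₂)))

section Transform

variable {β ν t : ℝ}

lemma div_rpow_eq_div_rpow_neg (β t p : ℝ) : (β / t) ^ p = (t / β) ^ (-p) := by
  rw [rpow_neg_eq_inv_rpow, inv_div]

lemma nuBSTransform_eq_two_mul_sinh (hβ : 0 < β) (ht : 0 < t) :
    nuBSTransform β ν t = 2 * sinh (ν * log (t / β)) := by
  have hx : 0 < t / β := div_pos ht hβ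
  rw [nuBSTransform, div_rpow_eq_div_rpow_neg β t, rpow_def_of_pos hx, rpow_def_of_pos hx,
    sinh_eq]
  ring_nf

lemma nuBSTransform_sq (hβ : 0 < β) (ht : 0 < t) :
    nuBSTransform β ν t ^ 2 = (t / β) ^ (2 * ν) + (β / t) ^ (2 * ν) - 2 := by
  have hx : 0 < t / β := div_pos ht hβ
  have h_mul : (t / β) ^ ν * (β / t) ^ ν = 1 := by
    rw [div_rpow_eq_div_rpow_neg β t, ← rpow_add hx, add_neg_cancel, rpow_zero]
  rw [nuBSTransform, mul_comm 2 ν, rpow_mul hx.le, rpow_mul (div_pos hβ ht).le, rpow_two, rpow_two]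
  linear_combination -2 * h_mul

lemma hasDerivAt_nuBSTransform (hβ : 0 < β) (ht : 0 < t) :
    HasDerivAt (nuBSTransform β ν) (ν / β * ((t / β) ^ (ν - 1) + (β / t) ^ (ν + 1))) t := by
  have h_div : HasDerivAt (fun s : ℝ => s / β) (1 / β) t := (hasDerivAt_id t).div_const β
  have h_rpow (p : ℝ) : HasDerivAt (fun s : ℝ => (s / β) ^ p) (1 / β * p * (t / β) ^ (p - 1)) t :=
    h_div.rpow_const (Or.inl (div_pos ht hβ).ne')
  have h_eq : nuBSTransform β ν = fun s => (s / β) ^ ν - (s / β) ^ (-ν) := by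
    funext s
    rw [nuBSTransform, div_rpow_eq_div_rpow_neg β s]
  rw [h_eq, div_rpow_eq_div_rpow_neg β t, neg_add']
  exact ((h_rpow ν).fun_sub (h_rpow (-ν))).congr_deriv (by ring)

lemma deriv_nuBSTransform (hβ : 0 < β) (ht : 0 < t) :
    deriv (nuBSTransform β ν) t = ν / β * ((t / β) ^ (ν - 1) + (β / t) ^ (ν + 1)) :=
  (hasDerivAt_nuBSTransform hβ ht).deriv

lemma deriv_nuBSTransform_nonneg (hβ : 0 < β) (hν : 0 ≤ ν) (ht : 0 < t) :
    0 ≤ deriv (nuBSTransform β ν) t := by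
  rw [deriv_nuBSTransform hβ ht]
  positivity

lemma injOn_nuBSTransform (hβ : 0 < β) (hν : ν ≠ 0) : InjOn (nuBSTransform β ν) (Ioi 0) := by
  intro s (hs : 0 < s) t (ht : 0 < t) h
  rw [nuBSTransform_eq_two_mul_sinh hβ hs, nuBSTransform_eq_two_mul_sinh hβ ht] at h
  have h_log : log (s / β) = log (t / β) :=
    mul_left_cancel₀ hν (sinh_injective (mul_left_cancel₀ two_ne_zero h))
  exact (div_left_inj' hβ.ne').1 (log_injOn_pos (div_pos hs hβ) (div_pos ht hβ) h_log)

lemma image_nuBSTransform_Ioi (hβ : 0 < β) (hν : ν ≠ 0) :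
    nuBSTransform β ν '' Ioi 0 = univ := by
  refine eq_univ_of_forall fun y => ?_
  obtain ⟨x, hx⟩ := sinh_surjective (y / 2)
  have hpos : 0 < β * exp (x / ν) := by positivity
  refine ⟨β * exp (x / ν), hpos, ?_⟩
  rw [nuBSTransform_eq_two_mul_sinh hβ hpos, mul_div_cancel_left₀ _ hβ.ne', log_exp,
    mul_div_cancel₀ _ hν, hx, mul_div_cancel₀ _ two_ne_zero]

lemma integral_abs_deriv_smul_comp_nuBSTransform {F : Type*} [NormedAddCommGroup F]
    [NormedSpace ℝ F] (hβ : 0 < β) (hν : ν ≠ 0) (g : ℝ → F) :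
    ∫ t in Ioi 0, |deriv (nuBSTransform β ν) t| • g (nuBSTransform β ν t) = ∫ y, g y := by
  have h_deriv : ∀ t ∈ Ioi (0 : ℝ), HasDerivWithinAt (nuBSTransform β ν)
      (deriv (nuBSTransform β ν) t) (Ioi 0) t := fun t ht =>
    (hasDerivAt_nuBSTransform hβ ht).differentiableAt.hasDerivAt.hasDerivWithinAt
  rw [← integral_image_eq_integral_abs_deriv_smul measurableSet_Ioi h_deriv
    (injOn_nuBSTransform hβ hν), image_nuBSTransform_Ioi hβ hν, Measure.restrict_univ]

end Transform

section Density

open ProbabilityTheory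

variable {α₁ β₁ ν₁ α₂ β₂ ν₂ ρ t₁ t₂ : ℝ}

lemma correlated_quadratic_eq_add_sq (hα₁ : α₁ ≠ 0) (hα₂ : α₂ ≠ 0) (hρ : 1 - ρ ^ 2 ≠ 0)
    (x y : ℝ) :
    -(1 / (2 * (1 - ρ ^ 2))) *
        ((1 / α₁ ^ 2) * x ^ 2 + (1 / α₂ ^ 2) * y ^ 2 - (2 * ρ / (α₁ * α₂)) * x * y) =
      -(1 / (2 * α₁ ^ 2)) * x ^ 2 +
        -(y - ρ * α₂ / α₁ * x) ^ 2 / (2 * (α₂ ^ 2 * (1 - ρ ^ 2))) := by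
  field_simp
  ring

lemma bvNuBSPDF_eq_nuBSPDF_mul (hα₁ : α₁ ≠ 0) (hβ₁ : 0 < β₁) (hα₂ : 0 < α₂) (hβ₂ : 0 < β₂)
    (hρ : |ρ| < 1) (ht₁ : 0 < t₁) (ht₂ : 0 < t₂) :
    bvNuBSPDF α₁ β₁ ν₁ α₂ β₂ ν₂ ρ t₁ t₂ =
      nuBSPDF α₁ β₁ ν₁ t₁ * (deriv (nuBSTransform β₂ ν₂) t₂ *
        gaussianPDFReal (ρ * α₂ / α₁ * nuBSTransform β₁ ν₁ t₁)
          (α₂ ^ 2 * (1 - ρ ^ 2)).toNNReal (nuBSTransform β₂ ν₂ t₂)) := by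
  have hρ' : 0 < 1 - ρ ^ 2 := sub_pos.2 ((sq_lt_one_iff_abs_lt_one ρ).2 hρ)
  have h_sqrt : √(2 * π * (α₂ ^ 2 * (1 - ρ ^ 2))) = √(2 * π) * (α₂ * √(1 - ρ ^ 2)) := by
    rw [sqrt_mul (by positivity), sqrt_mul (sq_nonneg α₂), sqrt_sq hα₂.le]
  have h_two_pi : 2 * π = √(2 * π) * √(2 * π) := (mul_self_sqrt (by positivity)).symm
  have h_exp := correlated_quadratic_eq_add_sq hα₁ hα₂.ne' hρ'.ne'
    (nuBSTransform β₁ ν₁ t₁) (nuBSTransform β₂ ν₂ t₂)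
  rw [bvNuBSPDF, ← nuBSTransform, ← nuBSTransform, h_exp, exp_add, nuBSPDF,
    ← nuBSTransform_sq hβ₁ ht₁, deriv_nuBSTransform hβ₂ ht₂, gaussianPDFReal,
    coe_toNNReal _ (by positivity), h_sqrt]
  nth_rewrite 1 [h_two_pi]
  field_simp

theorem bvNuBS_density_marginal_general (hα₁ : α₁ ≠ 0) (hβ₁ : 0 < β₁) (hα₂ : 0 < α₂)
    (hβ₂ : 0 < β₂) (hν₂ : 0 < ν₂) (hρ : |ρ| < 1) (ht₁ : 0 < t₁) :
    ∫ t₂ in Ioi 0, bvNuBSPDF α₁ β₁ ν₁ α₂ β₂ ν₂ ρ t₁ t₂ = nuBSPDF α₁ β₁ ν₁ t₁ := by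
  set μ := ρ * α₂ / α₁ * nuBSTransform β₁ ν₁ t₁
  set v := (α₂ ^ 2 * (1 - ρ ^ 2)).toNNReal
  have hρ' : 0 < 1 - ρ ^ 2 := sub_pos.2 ((sq_lt_one_iff_abs_lt_one ρ).2 hρ)
  have hv : v ≠ 0 := (toNNReal_pos.2 (by positivity)).ne'
  calc ∫ t₂ in Ioi 0, bvNuBSPDF α₁ β₁ ν₁ α₂ β₂ ν₂ ρ t₁ t₂
    _ = ∫ t₂ in Ioi 0, nuBSPDF α₁ β₁ ν₁ t₁ * (|deriv (nuBSTransform β₂ ν₂) t₂| •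
          gaussianPDFReal μ v (nuBSTransform β₂ ν₂ t₂)) := by
      refine setIntegral_congr_fun measurableSet_Ioi fun t₂ (ht₂ : 0 < t₂) => ?_
      simp only [bvNuBSPDF_eq_nuBSPDF_mul hα₁ hβ₁ hα₂ hβ₂ hρ ht₁ ht₂,
        abs_of_nonneg (deriv_nuBSTransform_nonneg hβ₂ hν₂.le ht₂), smul_eq_mul, μ, v]
    _ = nuBSPDF α₁ β₁ ν₁ t₁ * ∫ y, gaussianPDFReal μ v y := by
      rw [integral_const_mul, integral_abs_deriv_smul_comp_nuBSTransform hβ₂ hν₂.ne']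
    _ = nuBSPDF α₁ β₁ ν₁ t₁ := by
      rw [integral_gaussianPDFReal_eq_one μ hv, mul_one]

end Density

theorem bvNuBS_density_marginal (α₁ β₁ ν₁ α₂ β₂ ν₂ ρ : ℝ)
    (hα₁ : 0 < α₁) (hβ₁ : 0 < β₁) (hν₁0 : 0 < ν₁) (hν₁1 : ν₁ < 1)
    (hα₂ : 0 < α₂) (hβ₂ : 0 < β₂) (hν₂0 : 0 < ν₂) (hν₂1 : ν₂ < 1)
    (hρ1 : -1 < ρ) (hρ2 : ρ < 1) (t₁ : ℝ) (ht₁ : 0 < t₁) :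
    ∫ t₂ in Set.Ioi (0 : ℝ),
      (ν₁ * ν₂ / (2 * Real.pi * α₁ * α₂ * β₁ * β₂ * Real.sqrt (1 - ρ ^ 2))) *
        ((t₁ / β₁) ^ (ν₁ - 1) + (β₁ / t₁) ^ (ν₁ + 1)) *
        ((t₂ / β₂) ^ (ν₂ - 1) + (β₂ / t₂) ^ (ν₂ + 1)) *
        Real.exp (-(1 / (2 * (1 - ρ ^ 2))) *
          ((1 / α₁ ^ 2) * ((t₁ / β₁) ^ ν₁ - (β₁ / t₁) ^ ν₁) ^ 2 +
            (1 / α₂ ^ 2) * ((t₂ / β₂) ^ ν₂ - (β₂ / t₂) ^ ν₂) ^ 2 -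
            (2 * ρ / (α₁ * α₂)) * ((t₁ / β₁) ^ ν₁ - (β₁ / t₁) ^ ν₁) *
              ((t₂ / β₂) ^ ν₂ - (β₂ / t₂) ^ ν₂))) =
      (ν₁ / (α₁ * β₁ * Real.sqrt (2 * Real.pi))) *
        Real.exp (-(1 / (2 * α₁ ^ 2)) * ((t₁ / β₁) ^ (2 * ν₁) + (β₁ / t₁) ^ (2 * ν₁) - 2)) *
        ((t₁ / β₁) ^ (ν₁ - 1) + (β₁ / t₁) ^ (ν₁ + 1)) :=
  bvNuBS_density_marginal_general hα₁.ne' hβ₁ hα₂ hβ₂ hν₂0 (abs_lt.2 ⟨hρ1, hρ2⟩) ht₁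
end
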